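/- arXiv:1909.00150 — 4 statements merged into one kernel-verified Lean document; each statement's English description precedes it below -/
import Mathlib

section
/- Let 2 ≤ δ ≤ Δ be integers and let G = K_{Δ,δ} be the complete bipartite graph with parts of sizes Δ and δ. Then the inclusion chromatic index of G satisfies χ'_⊂(G) = ⌈(1 + 1/(δ−1))·Δ⌉. -/
/-!
View an edge colouring of `K_{Δ,δ}` as a `Δ × δ` array: proper means that rows and columns have
no repeated entry, and inclusion-freeness says that for every row `i` and column `j` some colour of
row `i` is absent from column `j`.

*Lower bound.* A colour used `m` times meets `m` rows and `m` columns, so it serves as the witness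
for at most `m (δ - m)` pairs `(i, j)`. Hence `Δ δ ≤ ∑ m (δ - m)`, while `∑ m = Δ δ`; bounding
`m (δ - m)` by its tangent line at `m = δ - 1` gives `Δ δ ≤ k (δ - 1)` for `k` colours
(`lower_bound`).

*Upper bound.* Put `k = Δ + ⌈Δ / (δ - 1)⌉` and take `δ` columns of the addition table of `ℤ/k`,
deleting the rows whose index in `[0, k)` is a multiple of `δ`; exactly `Δ` rows remain. Column `j`
misses the colours `j + tδ`, and row `i` uses a cyclic interval of `δ` consecutive colours. Since
the multiples of `δ` in `[0, k)` meet every cyclic interval of length `δ` of `ℤ/k`, each row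
contains a colour missing from each column (`exists_missing`).
-/

/-- The palette of a vertex `v` under an edge colouring `c` of `G`:
the set of colours appearing on edges incident with `v`. -/
def palette {V : Type*} (G : SimpleGraph V) (c : Sym2 V → ℕ) (v : V) : Set ℕ :=
  {n : ℕ | ∃ u : V, G.Adj v u ∧ c s(v, u) = n}

/-- `c` is a proper edge colouring of `G`: adjacent edges receive distinct colours. -/
def IsProperEdgeColoring {V : Type*} (G : SimpleGraph V) (c : Sym2 V → ℕ) : Prop :=
  ∀ u v w : V, G.Adj u v → G.Adj u w → v ≠ w → c s(u, v) ≠ c s(u, w)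

/-- `c` is an inclusion-free colouring of `G`: a proper edge colouring such that
for every edge `uv`, the palette of `u` is not contained in the palette of `v`. -/
def IsInclusionFree {V : Type*} (G : SimpleGraph V) (c : Sym2 V → ℕ) : Prop :=
  IsProperEdgeColoring G c ∧ ∀ u v : V, G.Adj u v → ¬ palette G c u ⊆ palette G c v

/-- The inclusion chromatic index: the least number of colours admitting an
inclusion-free colouring of `G`. -/
noncomputable def inclusionChromaticIndex {V : Type*} (G : SimpleGraph V) : ℕ :=
  sInf {k : ℕ | ∃ c : Sym2 V → ℕ, IsInclusionFree G c ∧ ∀ e ∈ G.edgeSet, c e < k}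

/-- Number of colours used by the construction, `Δ + ⌈Δ / (δ - 1)⌉` for `Δ ≥ 1`, `δ ≥ 2`. -/
def numColors (δ Δ : ℕ) : ℕ := Δ + (Δ - 1) / (δ - 1) + 1

/-- The `i`-th natural number that is not a multiple of `δ`, counting from `i = 0`, for `δ ≥ 2`. -/
def rowIndex (δ i : ℕ) : ℕ := i + i / (δ - 1) + 1

/-- Entry of the array in row `i` and column `j`. -/
def cellColor (δ Δ i j : ℕ) : ℕ := (rowIndex δ i + j) % numColors δ Δ

/-- The edge colouring of the complete bipartite graph given by `cellColor`, with junk value `0`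
on non-edges. -/
def cyclicColoring (δ Δ : ℕ) : Sym2 (Fin Δ ⊕ Fin δ) → ℕ :=
  Sym2.lift ⟨fun x y => match x, y with
    | .inl i, .inr j => cellColor δ Δ i j
    | .inr j, .inl i => cellColor δ Δ i j
    | _, _ => 0, by rintro (x | x) (y | y) <;> rfl⟩

lemma lt_numColors (δ Δ : ℕ) : Δ < numColors δ Δ := by
  rw [numColors, Nat.lt_succ_iff]
  exact Nat.le_add_right _ _

lemma rowIndex_strictMono (δ : ℕ) : StrictMono (rowIndex δ) := by
  intro a b h
  have := Nat.div_le_div_right (c := δ - 1) h.le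
  unfold rowIndex; omega

lemma rowIndex_lt {δ Δ i : ℕ} (hi : i < Δ) : rowIndex δ i < numColors δ Δ := by
  have := Nat.div_le_div_right (c := δ - 1) (show i ≤ Δ - 1 by omega)
  unfold rowIndex numColors; omega

lemma not_dvd_rowIndex {δ : ℕ} (h2 : 2 ≤ δ) (i : ℕ) : ¬ δ ∣ rowIndex δ i := by
  obtain ⟨d, rfl⟩ : ∃ d, δ = d + 1 := ⟨δ - 1, by omega⟩
  have hm := Nat.mod_lt i (show 0 < d by omega)
  have hd := Nat.div_add_mod i d
  have : rowIndex (d + 1) i = (i % d + 1) + (d + 1) * (i / d) := by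
    simp only [rowIndex, Nat.add_sub_cancel]
    nlinarith
  rw [this, Nat.dvd_add_left (Dvd.intro _ rfl)]
  exact Nat.not_dvd_of_pos_of_lt (by omega) (by omega)

/-- The multiples of `δ` in `[0, k)` meet every cyclic interval of length `δ` modulo `k`. -/
lemma exists_shift {δ k : ℕ} (hδ : 0 < δ) {y : ℕ} (hy : y < k) :
    ∃ t < δ, δ ∣ (y + t) % k := by
  obtain ⟨t, ht, hdvd⟩ : ∃ t < δ, δ ∣ y + t := by
    have hm := Nat.mod_lt y hδ
    have hd := Nat.div_add_mod y δ
    rcases Nat.eq_zero_or_pos (y % δ) with h0 | h0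
    · exact ⟨0, hδ, Nat.dvd_of_mod_eq_zero h0⟩
    · exact ⟨δ - y % δ, by omega, y / δ + 1, by rw [mul_add]; omega⟩
  by_cases h : y + t < k
  · exact ⟨t, ht, by rwa [Nat.mod_eq_of_lt h]⟩
  · -- the interval wraps around, hence contains `0`
    exact ⟨k - y, by omega, by simp [Nat.add_sub_cancel' hy.le]⟩

lemma cellColor_row_inj {δ Δ i j j' : ℕ} (hδΔ : δ ≤ Δ) (hj : j < δ) (hj' : j' < δ)
    (h : cellColor δ Δ i j = cellColor δ Δ i j') : j = j' := by
  have hk := lt_numColors δ Δ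
  have h' : j ≡ j' [MOD numColors δ Δ] := Nat.ModEq.add_left_cancel' _ h
  exact h'.eq_of_lt_of_lt (by omega) (by omega)

lemma rowIndex_eq_of_cellColor {δ Δ i j y : ℕ} (hi : i < Δ) (hy : y < numColors δ Δ)
    (h : cellColor δ Δ i j = (y + j) % numColors δ Δ) : rowIndex δ i = y := by
  have h' : rowIndex δ i ≡ y [MOD numColors δ Δ] := Nat.ModEq.add_right_cancel' _ h
  exact h'.eq_of_lt_of_lt (rowIndex_lt hi) hy

/-- Row `i` contains a colour absent from column `j`. -/
lemma exists_missing {δ Δ i j : ℕ} (h2 : 2 ≤ δ) (hδΔ : δ ≤ Δ) (hj : j < δ) :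
    ∃ t < δ, ∀ i' < Δ, cellColor δ Δ i' j ≠ cellColor δ Δ i t := by
  have hk : j < numColors δ Δ := (hj.trans_le hδΔ).trans (lt_numColors δ Δ)
  set k := numColors δ Δ with hkdef
  -- `rowIndex δ i + (k - j)` represents `rowIndex δ i - j` modulo `k`
  obtain ⟨t, ht, hdvd⟩ := exists_shift (δ := δ) (by omega) (Nat.mod_lt (rowIndex δ i + (k - j))
    (show 0 < k by omega))
  refine ⟨t, ht, fun i' hi' h => not_dvd_rowIndex h2 i' ?_⟩
  rw [rowIndex_eq_of_cellColor (j := j) hi' (Nat.mod_lt _ (show 0 < k by omega)) ?_]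
  · exact hdvd
  · rw [h, cellColor, ← hkdef, Nat.mod_add_mod, add_assoc (_ % k) t j, Nat.mod_add_mod, ← add_assoc]
    have : rowIndex δ i + (k - j) + t + j = rowIndex δ i + t + k := by omega
    rw [this, Nat.add_mod_right]

/-- Column palettes have size `Δ` and row palettes have size at most `δ ≤ Δ`, so a row palette not
contained in a column palette cannot contain it either. -/
lemma not_subset_of_not_subset {δ Δ : ℕ} (hδΔ : δ ≤ Δ) {f : Fin Δ → ℕ} {g : Fin δ → ℕ}
    (hf : Function.Injective f) (h : ¬ Set.range g ⊆ Set.range f) :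
    ¬ Set.range f ⊆ Set.range g := by
  intro hs
  apply h
  refine (Set.eq_of_subset_of_ncard_le hs ?_ (Set.finite_range g)).ge
  have h1 : (Set.range f).ncard = Δ := by
    rw [Set.ncard_eq_toFinset_card', Set.toFinset_range, Finset.card_image_of_injective _ hf]
    simp
  have h2 : (Set.range g).ncard ≤ δ := by
    rw [Set.ncard_eq_toFinset_card', Set.toFinset_range]
    exact Finset.card_image_le.trans (by simp)
  omega

lemma palette_inl {δ Δ : ℕ} (c : Sym2 (Fin Δ ⊕ Fin δ) → ℕ) (i : Fin Δ) :
    palette (completeBipartiteGraph (Fin Δ) (Fin δ)) c (.inl i) =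
      Set.range fun j : Fin δ => c s(.inl i, .inr j) := by
  ext n; simp [palette]

lemma palette_inr {δ Δ : ℕ} (c : Sym2 (Fin Δ ⊕ Fin δ) → ℕ) (j : Fin δ) :
    palette (completeBipartiteGraph (Fin Δ) (Fin δ)) c (.inr j) =
      Set.range fun i : Fin Δ => c s(.inl i, .inr j) := by
  ext n; simp [palette, Sym2.eq_swap]

lemma cellColor_col_inj {δ Δ : ℕ} (j : ℕ) :
    Function.Injective fun i : Fin Δ => cellColor δ Δ i j := by
  intro i i' h
  exact Fin.ext ((rowIndex_strictMono δ).injective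
    (rowIndex_eq_of_cellColor i.2 (rowIndex_lt i'.2) h))

lemma cyclicColoring_inclusionFree {δ Δ : ℕ} (h2 : 2 ≤ δ) (hδΔ : δ ≤ Δ) :
    IsInclusionFree (completeBipartiteGraph (Fin Δ) (Fin δ)) (cyclicColoring δ Δ) := by
  have key : ∀ (i : Fin Δ) (j : Fin δ),
      ¬ (Set.range fun t : Fin δ => cellColor δ Δ i t) ⊆
        Set.range fun i' : Fin Δ => cellColor δ Δ i' j := by
    intro i j hs
    obtain ⟨t, ht, hne⟩ := exists_missing (i := i) h2 hδΔ j.2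
    obtain ⟨i', hi'⟩ := hs ⟨⟨t, ht⟩, rfl⟩
    exact hne i' i'.2 hi'
  constructor
  · rintro (u | u) (v | v) (w | w) huv huw hvw h <;> simp at huv huw
    · exact hvw (congrArg _ (Fin.ext (cellColor_row_inj hδΔ v.2 w.2 h)))
    · exact hvw (congrArg _ (cellColor_col_inj u h))
  · rintro (u | u) (v | v) huv <;> simp at huv
    · rw [palette_inl, palette_inr]
      exact key u v
    · rw [palette_inl, palette_inr]
      exact not_subset_of_not_subset hδΔ (cellColor_col_inj u) (key v u)

/-- The double count, for a `Δ × δ` array with entries below `k`. -/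
lemma lower_bound {δ Δ k : ℕ} (h2 : 2 ≤ δ) (f : Fin Δ → Fin δ → ℕ) (hk : ∀ i j, f i j < k)
    (hrow : ∀ i j j', f i j = f i j' → j = j') (hcol : ∀ i i' j, f i j = f i' j → i = i')
    (hinc : ∀ i j, ∃ t, ∀ i', f i' j ≠ f i t) : Δ * δ ≤ k * (δ - 1) := by
  classical
  let cells : ℕ → Finset (Fin Δ × Fin δ) := fun a => Finset.univ.filter fun p => f p.1 p.2 = a
  have hmem : ∀ a p, p ∈ cells a ↔ f p.1 p.2 = a := by simp [cells]
  have hfst : ∀ a, ((cells a).image Prod.fst).card = (cells a).card := fun a =>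
    Finset.card_image_of_injOn fun p hp q hq h => by
      rw [Finset.mem_coe, hmem] at hp hq
      refine Prod.ext h (hrow p.1 _ _ ?_)
      rw [hp, h, hq]
  have hsnd : ∀ a, ((cells a).image Prod.snd).card = (cells a).card := fun a =>
    Finset.card_image_of_injOn fun p hp q hq h => by
      rw [Finset.mem_coe, hmem] at hp hq
      refine Prod.ext (hcol _ _ p.2 ?_) h
      rw [hp, h, hq]
  have hsum : ∑ a ∈ Finset.range k, (cells a).card = Δ * δ := by
    have := Finset.card_eq_sum_card_fiberwise (s := (Finset.univ : Finset (Fin Δ × Fin δ)))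
      (t := Finset.range k) (f := fun p => f p.1 p.2) (fun p _ => by simpa using hk p.1 p.2)
    simpa [cells] using this.symm
  have hcover : (Finset.univ : Finset (Fin Δ × Fin δ)) ⊆ (Finset.range k).biUnion fun a =>
      (cells a).image Prod.fst ×ˢ ((cells a).image Prod.snd)ᶜ := by
    rintro ⟨i, j⟩ -
    obtain ⟨t, ht⟩ := hinc i j
    simp only [Finset.mem_biUnion, Finset.mem_range, Finset.mem_product, Finset.mem_compl,
      Finset.mem_image, hmem]
    refine ⟨f i t, hk i t, ⟨(i, t), rfl, rfl⟩, ?_⟩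
    rintro ⟨⟨i', j'⟩, h, rfl⟩
    exact ht i' h
  have hcount : Δ * δ ≤ ∑ a ∈ Finset.range k, (cells a).card * (δ - (cells a).card) := by
    have := (Finset.card_le_card hcover).trans Finset.card_biUnion_le
    simpa [Finset.card_product, Finset.card_compl, hfst, hsnd] using this
  have hle : ∀ a, (cells a).card ≤ δ := fun a => by
    rw [← hsnd a]; exact (Finset.card_le_univ _).trans (by simp)
  obtain ⟨d, rfl⟩ : ∃ d, δ = d + 1 := ⟨δ - 1, by omega⟩
  -- tangent line of `m ↦ m (d + 1 - m)` at `m = d`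
  have htan : ∀ a, (cells a).card * (d + 1 - (cells a).card) + (d - 1) * (cells a).card
      ≤ d * d := fun a => by
    have hm := hle a
    generalize (cells a).card = m at hm
    obtain ⟨e, rfl⟩ : ∃ e, d = e + 1 := ⟨d - 1, by omega⟩
    rw [Nat.add_sub_cancel]
    zify [hm]
    nlinarith [sq_nonneg ((m : ℤ) - (e + 1))]
  have htot := Finset.sum_le_sum fun a (_ : a ∈ Finset.range k) => htan a
  rw [Finset.sum_add_distrib, ← Finset.mul_sum, hsum] at htot
  simp only [Finset.sum_const, Finset.card_range, smul_eq_mul] at htot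
  obtain ⟨e, rfl⟩ : ∃ e, d = e + 1 := ⟨d - 1, by omega⟩
  simp only [Nat.add_sub_cancel] at htot ⊢
  refine Nat.le_of_mul_le_mul_right (c := e + 1) ?_ (by omega)
  nlinarith

theorem inclusion_chromatic_index_complete_bipartite (δ Δ : ℕ) (h2 : 2 ≤ δ) (hδΔ : δ ≤ Δ) :
    inclusionChromaticIndex (completeBipartiteGraph (Fin Δ) (Fin δ)) =
      ⌈(1 + 1 / ((δ : ℝ) - 1)) * (Δ : ℝ)⌉₊ := by
  have hmem : numColors δ Δ ∈ {k : ℕ | ∃ c : Sym2 (Fin Δ ⊕ Fin δ) → ℕ,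
      IsInclusionFree (completeBipartiteGraph (Fin Δ) (Fin δ)) c ∧
      ∀ e ∈ (completeBipartiteGraph (Fin Δ) (Fin δ)).edgeSet, c e < k} := by
    refine ⟨cyclicColoring δ Δ, cyclicColoring_inclusionFree h2 hδΔ, ?_⟩
    have hpos : 0 < numColors δ Δ := Nat.succ_pos _
    intro e
    induction e with | _ x y
    rcases x with x | x <;> rcases y with y | y <;> intro h
    · simp at h
    · exact Nat.mod_lt _ hpos
    · exact Nat.mod_lt _ hpos
    · simp at h
  have hd : (0 : ℝ) < (δ : ℝ) - 1 := by
    have : (2 : ℝ) ≤ δ := by exact_mod_cast h2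
    linarith
  have hform : (1 + 1 / ((δ : ℝ) - 1)) * (Δ : ℝ) = (Δ * δ : ℝ) / (δ - 1) := by
    field_simp; ring
  rw [hform]
  apply le_antisymm
  · refine (Nat.sInf_le hmem).trans ?_
    rw [numColors, Nat.succ_le_iff, Nat.lt_ceil, lt_div_iff₀ hd]
    have h1 := Nat.div_mul_le_self (Δ - 1) (δ - 1)
    have h3 : ((Δ + (Δ - 1) / (δ - 1)) * (δ - 1) : ℕ) < Δ * δ := by
      obtain ⟨d, rfl⟩ : ∃ d, δ = d + 1 := ⟨δ - 1, by omega⟩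
      simp only [Nat.add_sub_cancel] at *
      rw [add_mul, mul_add]; omega
    have h4 : (((Δ + (Δ - 1) / (δ - 1)) * (δ - 1) : ℕ) : ℝ) < ((Δ * δ : ℕ) : ℝ) := by
      exact_mod_cast h3
    rw [Nat.cast_mul, Nat.cast_mul, Nat.cast_sub (show 1 ≤ δ by omega), Nat.cast_one] at h4
    exact h4
  · obtain ⟨c, ⟨hproper, hinc⟩, hlt⟩ := Nat.sInf_mem ⟨_, hmem⟩
    change _ ≤ sInf _
    rw [Nat.ceil_le, div_le_iff₀ hd]
    have := lower_bound h2 (fun i j => c s(.inl i, .inr j)) (fun i j => hlt _ (by simp))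
      (fun i j j' h => by
        by_contra hne
        exact hproper (.inl i) (.inr j) (.inr j') (by simp) (by simp) (by simpa using hne) h)
      (fun i i' j h => by
        by_contra hne
        refine hproper (.inr j) (.inl i) (.inl i') (by simp) (by simp) (by simpa using hne) ?_
        rw [Sym2.eq_swap, h, Sym2.eq_swap])
      (fun i j => by
        have := hinc (.inl i) (.inr j) (by simp)
        rw [palette_inl, palette_inr, Set.not_subset] at this
        obtain ⟨_, ⟨t, rfl⟩, ht⟩ := this
        exact ⟨t, fun i' h => ht ⟨i', h⟩⟩)
    rw [← Nat.cast_le (α := ℝ), Nat.cast_mul, Nat.cast_mul, Nat.cast_sub (show 1 ≤ δ by omega),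
      Nat.cast_one] at this
    exact this
end

section
/- Let 2 ≤ δ ≤ Δ be integers and let G = K_{Δ,δ} be the complete bipartite graph with parts X of size δ and Y of size Δ. Then every inclusion-free proper edge colouring of G uses at least Δ + ⌈Δ/(δ−1)⌉ colours. -/
theorem complete_bipartite_lower_bound (δ Δ : ℕ) (h2 : 2 ≤ δ) (hδΔ : δ ≤ Δ)
    (c : Sym2 (Fin Δ ⊕ Fin δ) → ℕ)
    (hc : IsInclusionFree (completeBipartiteGraph (Fin Δ) (Fin δ)) c) :
    Δ + ⌈(Δ : ℝ) / ((δ : ℝ) - 1)⌉₊ ≤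
      (c '' (completeBipartiteGraph (Fin Δ) (Fin δ)).edgeSet).ncard := by
  classical
  obtain ⟨hp, hi⟩ := hc
  let f : Fin Δ → Fin δ → ℕ := fun y x => c s(Sum.inl y, Sum.inr x)
  have hadj : ∀ (y : Fin Δ) (x : Fin δ),
      (completeBipartiteGraph (Fin Δ) (Fin δ)).Adj (Sum.inl y) (Sum.inr x) := by
    intro y x
    simp
  have hinj : ∀ x, Function.Injective (fun y => f y x) := by
    intro x y y' h
    by_contra hne
    refine hp (Sum.inr x) (Sum.inl y) (Sum.inl y') (hadj y x).symm (hadj y' x).symm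
      (fun e => hne (Sum.inl.inj e)) ?_
    rw [Sym2.eq_swap (a := Sum.inr x) (b := Sum.inl y),
      Sym2.eq_swap (a := Sum.inr x) (b := Sum.inl y')]
    exact h
  let C : Finset ℕ := Finset.univ.image (fun p : Fin Δ × Fin δ => f p.1 p.2)
  have hC : c '' (completeBipartiteGraph (Fin Δ) (Fin δ)).edgeSet = (C : Set ℕ) := by
    ext n
    simp only [Set.mem_image, C, Finset.coe_image, Finset.coe_univ, Set.image_univ, Set.mem_range]
    constructor
    · rintro ⟨e, he, rfl⟩
      induction e with
      | h a b =>
        rcases a with y | x <;> rcases b with y' | x'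
        · simp at he
        · exact ⟨(y, x'), rfl⟩
        · exact ⟨(y', x), by simp only [f]; rw [Sym2.eq_swap]⟩
        · simp at he
    · rintro ⟨⟨y, x⟩, rfl⟩
      exact ⟨_, hadj y x, rfl⟩
  rw [hC, Set.ncard_coe_finset]
  let x₀ : Fin δ := ⟨0, by omega⟩
  let S : Finset ℕ := Finset.univ.image (fun y => f y x₀)
  have hS : S.card = Δ := by
    rw [Finset.card_image_of_injective _ (hinj x₀), Finset.card_univ, Fintype.card_fin]
  have hSC : S ⊆ C := by
    intro n hn
    obtain ⟨y, -, rfl⟩ := Finset.mem_image.1 hn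
    exact Finset.mem_image.2 ⟨(y, x₀), Finset.mem_univ _, rfl⟩
  have hmiss : ∀ y, ∃ x, f y x ∉ S := by
    intro y
    by_contra! h
    refine hi _ _ (hadj y x₀) ?_
    rintro n ⟨u, hu, rfl⟩
    rcases u with y' | x
    · simp at hu
    · obtain ⟨y', -, hy'⟩ := Finset.mem_image.1 (h x)
      exact ⟨Sum.inl y', (hadj y' x₀).symm, by rw [Sym2.eq_swap]; exact hy'⟩
  choose g hg using hmiss
  -- `C \ S` is the set of colours missing at `x₀`; `y` is sent to the edge `y (g y)` with its colour.
  have hcard : Δ ≤ (C \ S).card * (δ - 1) := by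
    have key : (Finset.univ : Finset (Fin Δ)).card ≤
        ((C \ S) ×ˢ (Finset.univ.erase x₀)).card := by
      refine Finset.card_le_card_of_injOn (fun y => (f y (g y), g y)) ?_ ?_
      · intro y _
        simp only [Finset.coe_product, Set.mem_prod, Finset.mem_coe, Finset.mem_sdiff,
          Finset.mem_erase, Finset.mem_univ, and_true]
        refine ⟨⟨Finset.mem_image.2 ⟨(y, g y), Finset.mem_univ _, rfl⟩, hg y⟩, fun h => hg y ?_⟩
        rw [h]
        exact Finset.mem_image.2 ⟨y, Finset.mem_univ _, rfl⟩
      · intro y _ y' _ h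
        obtain ⟨h1, h2⟩ := Prod.mk.inj h
        rw [← h2] at h1
        exact hinj (g y) h1
    simpa [Finset.card_product, Finset.card_erase_of_mem] using key
  have hsum := Finset.card_sdiff_add_card_eq_card hSC
  have hceil : ⌈(Δ : ℝ) / ((δ : ℝ) - 1)⌉₊ ≤ (C \ S).card := by
    have h2' : (2 : ℝ) ≤ δ := by exact_mod_cast h2
    rw [Nat.ceil_le, div_le_iff₀ (by linarith)]
    have hR : (Δ : ℝ) ≤ ((C \ S).card : ℝ) * ((δ - 1 : ℕ) : ℝ) := by exact_mod_cast hcard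
    rwa [Nat.cast_sub (by omega), Nat.cast_one] at hR
  omega
end

section
/- Let 2 ≤ δ ≤ Δ be integers, set n = Δ + ⌈Δ/(δ−1)⌉, and let ℤ_{n,δ} = {j ∈ ℤ_n : j ≢ 0 (mod δ)}, a set of size Δ. Let G be the complete bipartite graph with parts X = {x_i : i ∈ ℤ_δ} and Y = {y_j : j ∈ ℤ_{n,δ}}, and define the edge colouring c : E(G) → ℤ_n by c(x_i y_j) = i + j (mod n). Then c is a proper edge colouring of G and c is inclusion-free. -/
/-- Reduction modulo `n` below `2 * n`, in a form that linear arithmetic can use. -/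
theorem mod_cases {n x : ℕ} (h : x < 2 * n) :
    (x < n ∧ x % n = x) ∨ (n ≤ x ∧ x % n = x - n) := by
  rcases lt_or_ge x n with hx | hx
  · exact Or.inl ⟨hx, Nat.mod_eq_of_lt hx⟩
  · refine Or.inr ⟨hx, ?_⟩
    rw [Nat.mod_eq_sub_mod hx, Nat.mod_eq_of_lt (by omega)]

theorem add_two_le {δ Δ : ℕ} (h2 : 2 ≤ δ) (hδΔ : δ ≤ Δ) :
    δ + 2 ≤ Δ + ⌈(Δ : ℝ) / ((δ : ℝ) - 1)⌉₊ := by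
  have h : 1 < ⌈(Δ : ℝ) / ((δ : ℝ) - 1)⌉₊ := by
    have h2' : (2 : ℝ) ≤ δ := by exact_mod_cast h2
    have h3 : (δ : ℝ) ≤ Δ := by exact_mod_cast hδΔ
    rw [Nat.lt_ceil, Nat.cast_one, lt_div_iff₀ (by linarith)]
    linarith
  omega

theorem add_mod_inj {n a b b' : ℕ} (hb : b < n) (hb' : b' < n)
    (h : (a + b) % n = (a + b') % n) : b = b' :=
  Nat.ModEq.eq_of_lt_of_lt (Nat.ModEq.add_left_cancel' a h) hb hb'

/-- Some colour `i + k` at `x_i` lies outside the cyclic interval `j, …, j + δ - 1`. -/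
theorem exists_x_colour_missed {δ n i j : ℕ} (h2 : 2 ≤ δ) (hn : δ + 2 ≤ n) (hi : i < δ)
    (hj : j < n) :
    ∃ k < n, k % δ ≠ 0 ∧ ∀ t < δ, (j + t) % n ≠ (i + k) % n := by
  -- `a` is the representative of `i + 1 - j` in `[0, n)`.
  obtain ⟨a, ha, haj⟩ : ∃ a < n, a + j = i + 1 ∨ a + j = i + 1 + n := by
    rcases le_or_gt j (i + 1) with h | h
    · exact ⟨i + 1 - j, by omega, by omega⟩
    · exact ⟨i + 1 + n - j, by omega, by omega⟩
  -- In each case `k` is chosen so that `δ ≤ a + k - 1 < n`.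
  obtain ⟨k, hk, hkδ, h1, h3⟩ :
      ∃ k < n, k % δ ≠ 0 ∧ δ + 1 ≤ a + k ∧ a + k ≤ n := by
    rcases lt_or_ge a 2 with h | h
    · refine ⟨δ + 1, by omega, ?_, by omega, by omega⟩
      rw [Nat.add_mod_left, Nat.mod_eq_of_lt (by omega)]
      omega
    · rcases lt_or_ge a δ with h' | h'
      · refine ⟨δ + 1 - a, by omega, ?_, by omega, by omega⟩
        rw [Nat.mod_eq_of_lt (by omega)]
        omega
      · refine ⟨1, by omega, ?_, by omega, by omega⟩
        rw [Nat.mod_eq_of_lt (by omega)]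
        omega
  refine ⟨k, hk, hkδ, fun t ht h => ?_⟩
  have e1 := mod_cases (n := n) (x := j + t) (by omega)
  have e2 := mod_cases (n := n) (x := i + k) (by omega)
  omega

/-- Some colour `j + t` at `y_j` differs from every colour at `x_i`. -/
theorem exists_y_colour_missed {δ n i j : ℕ} (h2 : 2 ≤ δ) (hn : δ + 2 ≤ n) (hi : i < δ)
    (hj : j < n) :
    ∃ t < δ, ∀ k < n, k % δ ≠ 0 → (i + k) % n ≠ (j + t) % n := by
  -- `m` is the representative of `j - i` in `[0, n)`.
  obtain ⟨m, hm, hmj⟩ : ∃ m < n, m + i = j ∨ m + i = j + n := by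
    rcases le_or_gt i j with h | h
    · exact ⟨j - i, by omega, by omega⟩
    · exact ⟨j + n - i, by omega, by omega⟩
  -- Either the interval `m, …, m + δ - 1` has a multiple of `δ` below `n`, or it reaches `n ≡ 0`.
  obtain ⟨t, ht, hmt⟩ : ∃ t < δ, (m + t < n ∧ (m + t) % δ = 0) ∨ m + t = n := by
    obtain ⟨s, hs, hms⟩ : ∃ s < δ, (m + s) % δ = 0 := by
      have hr : m % δ < δ := Nat.mod_lt _ (by omega)
      rcases Nat.eq_zero_or_pos (m % δ) with h | h
      · exact ⟨0, by omega, h⟩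
      · refine ⟨δ - m % δ, by omega, ?_⟩
        rw [Nat.add_mod, Nat.mod_eq_of_lt (a := δ - m % δ) (by omega),
          Nat.add_sub_cancel' hr.le, Nat.mod_self]
    rcases lt_or_ge (m + s) n with h | h
    · exact ⟨s, hs, Or.inl ⟨h, hms⟩⟩
    · exact ⟨n - m, by omega, Or.inr (by omega)⟩
  refine ⟨t, ht, fun k hk hkδ h => ?_⟩
  have e1 := mod_cases (n := n) (x := j + t) (by omega)
  have e2 := mod_cases (n := n) (x := i + k) (by omega)
  rcases hmt with ⟨hlt, hmod⟩ | heq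
  · have : k = m + t := by omega
    exact hkδ (this ▸ hmod)
  · have : k = 0 := by omega
    exact hkδ (by rw [this, Nat.zero_mod])

theorem complete_bipartite_explicit_coloring (δ Δ : ℕ) (h2 : 2 ≤ δ) (hδΔ : δ ≤ Δ)
    (n : ℕ) (hn : n = Δ + ⌈(Δ : ℝ) / ((δ : ℝ) - 1)⌉₊)
    (c : Sym2 (Fin δ ⊕ {j : Fin n // j.val % δ ≠ 0}) → ℕ)
    (hc : c = Sym2.lift
      ⟨fun u v =>
        (Sum.elim (fun i : Fin δ => i.val) (fun j : {j : Fin n // j.val % δ ≠ 0} => j.1.val) u +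
         Sum.elim (fun i : Fin δ => i.val) (fun j : {j : Fin n // j.val % δ ≠ 0} => j.1.val) v)
          % n,
       fun u v => by simp only []; rw [Nat.add_comm]⟩) :
    IsInclusionFree (completeBipartiteGraph (Fin δ) {j : Fin n // j.val % δ ≠ 0}) c := by
  have hn2 : δ + 2 ≤ n := hn ▸ add_two_le h2 hδΔ
  subst hc
  refine ⟨?_, ?_⟩
  · rintro (i | j) (v | v) (w | w) huv huw hvw h <;>
      simp only [completeBipartiteGraph_adj, Sum.isLeft_inl, Sum.isLeft_inr, Sum.isRight_inl,
        Sum.isRight_inr, Bool.false_eq_true, and_false, false_and, or_self] at huv huw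
    · simp only [Sym2.lift_mk, Sum.elim_inl, Sum.elim_inr] at h
      exact hvw (congrArg Sum.inr (Subtype.ext (Fin.ext
        (add_mod_inj v.1.isLt w.1.isLt h))))
    · simp only [Sym2.lift_mk, Sum.elim_inl, Sum.elim_inr] at h
      have hv := v.isLt
      have hw := w.isLt
      exact hvw (congrArg Sum.inl (Fin.ext (add_mod_inj (by omega) (by omega) h)))
  · rintro (i | j) (i' | j') huv hsub <;>
      simp only [completeBipartiteGraph_adj, Sum.isLeft_inl, Sum.isLeft_inr, Sum.isRight_inl,
        Sum.isRight_inr, Bool.false_eq_true, and_false, false_and, or_self] at huv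
    · obtain ⟨k, hk, hkδ, hmiss⟩ := exists_x_colour_missed h2 hn2 i.isLt j'.1.isLt
      obtain ⟨u, hu, he⟩ := hsub ⟨Sum.inr ⟨⟨k, hk⟩, hkδ⟩, by simp, rfl⟩
      rcases u with t | t
      · exact hmiss t t.isLt he
      · simp at hu
    · obtain ⟨t, ht, hmiss⟩ := exists_y_colour_missed h2 hn2 i'.isLt j.1.isLt
      obtain ⟨u, hu, he⟩ := hsub ⟨Sum.inl ⟨t, ht⟩, by simp, rfl⟩
      rcases u with k | k
      · simp at hu
      · exact hmiss k.1 k.1.isLt k.2 he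
end

section
/- Let G be a graph of minimum degree δ ≥ 2 and maximum degree Δ. Then the inclusion chromatic index of G satisfies χ'_⊂(G) ≤ 3Δ − 1. -/
namespace InclusionFree

open Finset
open scoped Classical

variable {V : Type*} [Fintype V]

/-! ### Partial colourings -/

/-- The palette of `v` in the partial colouring given by `c` on the set `E` of coloured edges. -/
noncomputable def pal (E : Finset (Sym2 V)) (c : Sym2 V → ℕ) (v : V) : Finset ℕ :=
  (univ.filter (fun u => s(v, u) ∈ E)).image (fun u => c s(v, u))

/-- `c` is a proper colouring, with colours below `K`, of the edges in `E`. -/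
def PartialProper (E : Finset (Sym2 V)) (c : Sym2 V → ℕ) (K : ℕ) : Prop :=
  (∀ e ∈ E, c e < K) ∧
    ∀ u v w : V, s(u, v) ∈ E → s(u, w) ∈ E → v ≠ w → c s(u, v) ≠ c s(u, w)

/-- If `vz` and `vw` are coloured, `z` is higher than `v` and `w` is lower than `z`, then the pair
`(v, z)` is dead. -/
def Inv (ρ : V → ℕ) (E : Finset (Sym2 V)) (c : Sym2 V → ℕ) (v : V) : Prop :=
  ∀ z w : V, s(v, z) ∈ E → s(v, w) ∈ E → ρ z < ρ v → ρ z < ρ w → ¬ pal E c v ⊆ pal E c z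

lemma mem_pal {E : Finset (Sym2 V)} {c : Sym2 V → ℕ} {v : V} {n : ℕ} :
    n ∈ pal E c v ↔ ∃ u, s(v, u) ∈ E ∧ c s(v, u) = n := by
  simp [pal]

lemma pal_insert_left {E : Finset (Sym2 V)} {c : Sym2 V → ℕ} {x y : V} {a : ℕ}
    (hE : s(x, y) ∉ E) :
    pal (insert s(x, y) E) (Function.update c s(x, y) a) x = insert a (pal E c x) := by
  ext n
  simp only [mem_pal, Finset.mem_insert]
  constructor
  · rintro ⟨u, hu, rfl⟩
    by_cases h : s(x, u) = s(x, y)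
    · left; rw [h, Function.update_self]
    · right
      exact ⟨u, hu.resolve_left h, by rw [Function.update_of_ne h]⟩
  · rintro (rfl | ⟨u, hu, rfl⟩)
    · exact ⟨y, Or.inl rfl, by rw [Function.update_self]⟩
    · have h : s(x, u) ≠ s(x, y) := fun h => hE (h ▸ hu)
      exact ⟨u, Or.inr hu, by rw [Function.update_of_ne h]⟩

lemma pal_insert_right {E : Finset (Sym2 V)} {c : Sym2 V → ℕ} {x y : V} {a : ℕ}
    (hE : s(x, y) ∉ E) :
    pal (insert s(x, y) E) (Function.update c s(x, y) a) y = insert a (pal E c y) := by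
  rw [Sym2.eq_swap] at hE ⊢
  exact pal_insert_left hE

lemma pal_insert_of_ne {E : Finset (Sym2 V)} {c : Sym2 V → ℕ} {x y v : V} {a : ℕ}
    (hx : v ≠ x) (hy : v ≠ y) :
    pal (insert s(x, y) E) (Function.update c s(x, y) a) v = pal E c v := by
  ext n
  have h : ∀ u, s(v, u) ≠ s(x, y) := by
    intro u h
    rcases Sym2.eq_iff.1 h with ⟨h, -⟩ | ⟨h, -⟩
    · exact hx h
    · exact hy h
  simp only [mem_pal, Finset.mem_insert, h, false_or]
  refine exists_congr fun u => and_congr_right fun _ => ?_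
  rw [Function.update_of_ne (h u)]

lemma PartialProper.insert {E : Finset (Sym2 V)} {c : Sym2 V → ℕ} {K : ℕ} {x y : V} {a : ℕ}
    (hc : PartialProper E c K) (ha : a < K) (hE : s(x, y) ∉ E)
    (hx : a ∉ pal E c x) (hy : a ∉ pal E c y) :
    PartialProper (insert s(x, y) E) (Function.update c s(x, y) a) K := by
  have key : ∀ u v w : V, s(u, v) = s(x, y) → s(u, w) ∈ E → a ≠ c s(u, w) := by
    intro u v w h hw ha'
    rcases Sym2.eq_iff.1 h with ⟨rfl, -⟩ | ⟨rfl, -⟩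
    · exact hx (mem_pal.2 ⟨w, hw, ha'.symm⟩)
    · exact hy (mem_pal.2 ⟨w, hw, ha'.symm⟩)
  refine ⟨fun e he => ?_, fun u v w hv hw hvw => ?_⟩
  · by_cases h : e = s(x, y)
    · rw [h, Function.update_self]; exact ha
    · rw [Function.update_of_ne h]
      exact hc.1 e ((Finset.mem_insert.1 he).resolve_left h)
  · by_cases h1 : s(u, v) = s(x, y) <;> by_cases h2 : s(u, w) = s(x, y)
    · exact absurd (Sym2.congr_right.1 (h1.trans h2.symm)) hvw
    · rw [h1, Function.update_self, Function.update_of_ne h2]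
      exact key u v w h1 ((Finset.mem_insert.1 hw).resolve_left h2)
    · rw [h2, Function.update_self, Function.update_of_ne h1]
      exact (key u w v h2 ((Finset.mem_insert.1 hv).resolve_left h1)).symm
    · rw [Function.update_of_ne h1, Function.update_of_ne h2]
      exact hc.2 u v w ((Finset.mem_insert.1 hv).resolve_left h1)
        ((Finset.mem_insert.1 hw).resolve_left h2) hvw

variable (G : SimpleGraph V) [DecidableRel G.Adj]

lemma card_pal_le {E : Finset (Sym2 V)} (c : Sym2 V → ℕ) (hE : ∀ e ∈ E, e ∈ G.edgeSet) (v : V) :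
    (pal E c v).card ≤ G.degree v := by
  refine card_image_le.trans ?_
  rw [← G.card_neighborFinset_eq_degree]
  refine card_le_card fun u hu => ?_
  exact (G.mem_neighborFinset v u).2 (hE _ (by simpa using hu))

lemma card_pal_lt {E : Finset (Sym2 V)} (c : Sym2 V → ℕ) (hE : ∀ e ∈ E, e ∈ G.edgeSet)
    {v w : V} (hvw : G.Adj v w) (h : s(v, w) ∉ E) : (pal E c v).card < G.degree v := by
  refine card_image_le.trans_lt ?_
  rw [← G.card_neighborFinset_eq_degree]
  refine card_lt_card ⟨fun u hu => ?_, fun hsub => ?_⟩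
  · exact (G.mem_neighborFinset v u).2 (hE _ (by simpa using hu))
  · have := hsub (show w ∈ G.neighborFinset v by simpa using hvw)
    exact h (by simpa using this)

lemma exists_color {K : ℕ} (F : Finset ℕ) (h : F.card < K) : ∃ a < K, a ∉ F := by
  obtain ⟨a, ha, ha'⟩ := exists_mem_notMem_of_card_lt_card (s := F) (t := range K) (by simpa using h)
  exact ⟨a, by simpa using ha, ha'⟩

/-- A new colour at `x` outside `W` is proper at `x` and kills every coloured alive pair `(x, z)`.
Since there is at most one such pair, `W` can be taken to be `P z` if it exists and `P x`
otherwise. -/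
lemma exists_guard {ρ : V → ℕ} (hρ : Function.Injective ρ) {E : Finset (Sym2 V)} {c : Sym2 V → ℕ}
    (hE : ∀ e ∈ E, e ∈ G.edgeSet) {x y : V} (hxy : G.Adj x y) (hn : s(x, y) ∉ E)
    (hI : Inv ρ E c x) :
    ∃ W : Finset ℕ, pal E c x ⊆ W ∧
      (∀ z, s(x, z) ∈ E → ρ z < ρ x → pal E c x ⊆ pal E c z → pal E c z ⊆ W) ∧
      (W.card < G.degree x ∨ (W.card ≤ G.maxDegree ∧ ∃ z, G.Adj x z ∧ ρ z < ρ x)) := by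
  by_cases h : ∃ z, s(x, z) ∈ E ∧ ρ z < ρ x ∧ pal E c x ⊆ pal E c z
  · obtain ⟨z, hz, hzx, hal⟩ := h
    refine ⟨pal E c z, hal, fun z' hz' hzx' hal' => ?_, Or.inr ⟨?_, z, hE _ hz, hzx⟩⟩
    · rcases lt_trichotomy (ρ z) (ρ z') with h | h | h
      · exact absurd hal (hI z z' hz hz' hzx h)
      · rw [hρ h]
      · exact absurd hal' (hI z' z hz' hz hzx' h)
    · exact (card_pal_le G c hE z).trans (G.degree_le_maxDegree z)
  · push Not at h
    exact ⟨pal E c x, Subset.rfl, fun z hz hzx hal => absurd hal (h z hz hzx),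
      Or.inl (card_pal_lt G c hE hxy hn)⟩

/-! ### Greedy colouring in two phases -/

lemma exists_phase_one {ρ : V → ℕ} (hρ : Function.Injective ρ) (hΔ : 2 ≤ G.maxDegree)
    (E : Finset (Sym2 V)) (hE : ∀ e ∈ E, e ∈ G.edgeSet) :
    ∃ c, PartialProper E c (3 * G.maxDegree - 1) ∧ ∀ v, Inv ρ E c v := by
  induction E using Finset.induction_on_max_value (fun e : Sym2 V => (e.map ρ).inf) with
  | empty => exact ⟨fun _ => 0, by simp [PartialProper], by simp [Inv]⟩
  | insert e E he hmax ih =>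
    obtain ⟨c, hc, hI⟩ := ih fun e' he' => hE e' (Finset.mem_insert_of_mem he')
    have hE' : ∀ e' ∈ E, e' ∈ G.edgeSet := fun e' he' => hE e' (Finset.mem_insert_of_mem he')
    obtain ⟨x, y, rfl, hlt⟩ : ∃ x y, e = s(x, y) ∧ ρ x < ρ y := by
      have hadj := hE e (Finset.mem_insert_self _ _)
      induction e using Sym2.ind with
      | _ x y =>
        have hne : ρ x ≠ ρ y := fun h => G.ne_of_adj hadj (hρ h)
        rcases lt_or_gt_of_ne hne with h | h
        · exact ⟨x, y, rfl, h⟩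
        · exact ⟨y, x, Sym2.eq_swap, h⟩
    have hxy : G.Adj x y := hE _ (Finset.mem_insert_self _ _)
    have hkey : ∀ u w, s(u, w) ∈ E → ρ u ≤ ρ x ∨ ρ w ≤ ρ x := by
      intro u w h
      have := hmax _ h
      simp only [Sym2.map_mk, Sym2.inf_mk] at this
      rw [inf_eq_left.2 hlt.le] at this
      exact inf_le_iff.1 this
    obtain ⟨W, hW1, hW2, hW3⟩ := exists_guard G hρ hE' hxy he (hI x)
    obtain ⟨W', hW1', hW2', hW3'⟩ :=
      exists_guard G hρ hE' hxy.symm (by rwa [Sym2.eq_swap]) (hI y)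
    have hx := G.degree_le_maxDegree x
    have hy := G.degree_le_maxDegree y
    obtain ⟨a, ha, haF⟩ := exists_color (K := 3 * G.maxDegree - 1) (W ∪ W') (by
      have := card_union_le W W'
      have h1 : W.card ≤ G.maxDegree := by rcases hW3 with h | h <;> omega
      have h2 : W'.card ≤ G.maxDegree := by rcases hW3' with h | h <;> omega
      omega)
    simp only [Finset.mem_union, not_or] at haF
    refine ⟨Function.update c s(x, y) a,
      hc.insert ha he (fun h => haF.1 (hW1 h)) (fun h => haF.2 (hW1' h)), ?_⟩
    intro v z w hz hw hzv hzw
    have hz' : s(v, z) ∈ E ∨ (v = y ∧ z = x) := by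
      rcases Finset.mem_insert.1 hz with h | h
      · rcases Sym2.eq_iff.1 h with ⟨rfl, rfl⟩ | h
        · omega
        · exact Or.inr h
      · exact Or.inl h
    -- The higher end of `vw` is `x` or higher than `x`, because of the order of the edges; and `z` is
    -- higher than both `v` and `w`.
    have hzlt : ρ z < ρ x := by
      rcases Finset.mem_insert.1 hw with h | h
      · rcases Sym2.eq_iff.1 h with ⟨rfl, rfl⟩ | ⟨rfl, rfl⟩ <;> assumption
      · rcases hkey v w h with h | h <;> omega
    have hzx : z ≠ x := fun h => by rw [h] at hzlt; omega
    have hzy : z ≠ y := fun h => by rw [h] at hzlt; omega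
    have hzE : s(v, z) ∈ E := hz'.resolve_right fun h => hzx h.2
    rw [pal_insert_of_ne hzx hzy]
    by_cases hvx : v = x
    · subst hvx
      rw [pal_insert_left he]
      intro hsub
      rw [Finset.insert_subset_iff] at hsub
      exact haF.1 (hW2 z hzE hzv hsub.2 hsub.1)
    by_cases hvy : v = y
    · subst hvy
      rw [pal_insert_right he]
      intro hsub
      rw [Finset.insert_subset_iff] at hsub
      exact haF.2 (hW2' z hzE hzv hsub.2 hsub.1)
    rw [pal_insert_of_ne hvx hvy]
    have hwE : s(v, w) ∈ E := by
      refine (Finset.mem_insert.1 hw).resolve_left fun h => ?_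
      rcases Sym2.eq_iff.1 h with ⟨h, -⟩ | ⟨h, -⟩
      · exact hvx h
      · exact hvy h
    exact hI v z w hzE hwE hzv hzw

/-- The vertices with no lower neighbour. -/
def IsSink (ρ : V → ℕ) (v : V) : Prop := ∀ u, G.Adj v u → ρ u < ρ v

/-- A colour outside `S`, put on an edge `yv`, revives no dead pair `(u, y)` with `u ≠ v` lower
than `y`; there is at most one forbidden colour for each such `u`. -/
lemma exists_revive (ρ : V → ℕ) (P : V → Finset ℕ) (y v : V) :
    ∃ S : Finset ℕ, S.card ≤ (((G.neighborFinset y).erase v).filter (fun u => ρ y < ρ u)).card ∧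
      ∀ u a, G.Adj u y → u ≠ v → ρ y < ρ u → a ∉ S → ¬ P u ⊆ P y → ¬ P u ⊆ insert a (P y) := by
  refine ⟨(((G.neighborFinset y).erase v).filter (fun u => ρ y < ρ u)).biUnion
    (fun u => if (P u \ P y).card ≤ 1 then P u \ P y else ∅), ?_, ?_⟩
  · refine (card_biUnion_le_card_mul _ _ 1 fun u _ => ?_).trans (mul_one _).le
    split_ifs with h
    · exact h
    · simp
  · intro u a hu huv hρu ha hdead hsub
    have hsub' : P u \ P y ⊆ {a} := by
      intro b hb
      rw [Finset.mem_sdiff] at hb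
      simpa using (Finset.mem_insert.1 (hsub hb.1)).resolve_right hb.2
    obtain ⟨b, hb, hb'⟩ := Finset.not_subset.1 hdead
    have hbm : b ∈ P u \ P y := Finset.mem_sdiff.2 ⟨hb, hb'⟩
    have hba : b = a := by simpa using hsub' hbm
    refine ha (Finset.mem_biUnion.2 ⟨u, ?_, ?_⟩)
    · simp [huv, hu.symm, hρu]
    · rw [if_pos (by simpa using card_le_card hsub'), ← hba]
      exact hbm

lemma exists_phase_two {ρ : V → ℕ} (hρ : Function.Injective ρ) (hΔ : 2 ≤ G.maxDegree)
    (σ : V → V → V) (hσ : ∀ v y, G.Adj v y → G.Adj v (σ v y) ∧ σ v y ≠ y)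
    (E₀ : Finset (Sym2 V)) (hE₀ : ∀ e ∈ E₀, e ∈ G.edgeSet)
    (hD₀ : ∀ v, IsSink G ρ v → ∀ y, s(v, y) ∉ E₀)
    (F : Finset (Sym2 V)) (hF : ∀ e ∈ F, e ∈ G.edgeSet ∧ ∃ v ∈ e, IsSink G ρ v) :
    ∃ c, PartialProper (F ∪ E₀) c (3 * G.maxDegree - 1) ∧
      (∀ v, ¬ IsSink G ρ v → Inv ρ (F ∪ E₀) c v) ∧
      ∀ v y, IsSink G ρ v → s(v, y) ∈ F → ¬ pal (F ∪ E₀) c v ⊆ pal (F ∪ E₀) c (σ v y) := by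
  induction F using Finset.induction_on with
  | empty =>
    obtain ⟨c, hc, hI⟩ := exists_phase_one G hρ hΔ E₀ hE₀
    exact ⟨c, by simpa using hc, fun v _ => by simpa using hI v, by simp⟩
  | insert e F he ih =>
    obtain ⟨c, hc, hI, hII⟩ := ih fun e' he' => hF e' (Finset.mem_insert_of_mem he')
    obtain ⟨heG, v₀, hv₀e, hv₀⟩ := hF e (Finset.mem_insert_self _ _)
    obtain ⟨y₀, rfl⟩ := hv₀e
    have hadj : G.Adj v₀ y₀ := heG
    rw [Finset.insert_union]
    have hEG : ∀ e' ∈ F ∪ E₀, e' ∈ G.edgeSet := by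
      intro e' he'
      rcases Finset.mem_union.1 he' with h | h
      · exact (hF e' (Finset.mem_insert_of_mem h)).1
      · exact hE₀ e' h
    have hn : s(v₀, y₀) ∉ F ∪ E₀ := by
      rw [Finset.mem_union, not_or]
      exact ⟨he, hD₀ v₀ hv₀ y₀⟩
    have hIIF : ∀ v y, IsSink G ρ v → s(v, y) ∈ insert s(v₀, y₀) F → s(v, y) ≠ s(v₀, y₀) →
        ¬ pal (F ∪ E₀) c v ⊆ pal (F ∪ E₀) c (σ v y) := fun v y hv h hne =>
      hII v y hv ((Finset.mem_insert.1 h).resolve_left hne)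
    have hFG : ∀ v y, s(v, y) ∈ insert s(v₀, y₀) F → G.Adj v y := fun v y h => (hF _ h).1
    clear hII hF he
    generalize F ∪ E₀ = E at *
    have hlt : ρ y₀ < ρ v₀ := hv₀ y₀ hadj
    have hy₀ : ¬ IsSink G ρ y₀ := fun h => absurd (h v₀ hadj.symm) (by omega)
    obtain ⟨hσadj, hσne⟩ := hσ v₀ y₀ hadj
    have hn' : s(y₀, v₀) ∉ E := by rwa [Sym2.eq_swap]
    obtain ⟨W, hW1, hW2, hW3⟩ := exists_guard G hρ hEG hadj.symm hn' (hI y₀ hy₀)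
    obtain ⟨S, hS1, hS2⟩ := exists_revive G ρ (pal E c) y₀ v₀
    -- The set forbidden at the end `v₀`, which forces the edge to kill `(v₀, σ v₀ y₀)`.
    obtain ⟨U, hU1, hU2, hU3⟩ : ∃ U : Finset ℕ, pal E c v₀ ⊆ U ∧
        (pal E c v₀ ⊆ pal E c (σ v₀ y₀) → pal E c (σ v₀ y₀) ⊆ U) ∧ U.card ≤ G.maxDegree := by
      by_cases h : pal E c v₀ ⊆ pal E c (σ v₀ y₀)
      · exact ⟨_, h, fun _ => Subset.rfl, (card_pal_le G c hEG _).trans (G.degree_le_maxDegree _)⟩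
      · exact ⟨_, Subset.rfl, fun h' => absurd h' h,
          (card_pal_le G c hEG _).trans (G.degree_le_maxDegree _)⟩
    have hdeg := G.degree_le_maxDegree y₀
    have herase : ((G.neighborFinset y₀).erase v₀).card + 1 = G.degree y₀ := by
      rw [← G.card_neighborFinset_eq_degree]
      exact card_erase_add_one (by simpa using hadj.symm)
    have hWS : W.card + S.card + 2 ≤ 2 * G.maxDegree := by
      rcases hW3 with h | ⟨h, z, hz, hzρ⟩
      · have := card_filter_le ((G.neighborFinset y₀).erase v₀) (fun u => ρ y₀ < ρ u)
        omega
      · -- The higher neighbour `z` is not among the lower neighbours counted by `S`.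
        have : (((G.neighborFinset y₀).erase v₀).filter (fun u => ρ y₀ < ρ u)).card <
            ((G.neighborFinset y₀).erase v₀).card := by
          refine card_lt_card (filter_ssubset.2 ⟨z, ?_, by omega⟩)
          have hzv : z ≠ v₀ := fun h => by rw [h] at hzρ; omega
          simp [hzv, hz]
        omega
    obtain ⟨a, ha, haF⟩ := exists_color (K := 3 * G.maxDegree - 1) (W ∪ S ∪ U) (by
      have := card_union_le (W ∪ S) U
      have := card_union_le W S
      omega)
    simp only [Finset.mem_union, not_or] at haF
    obtain ⟨⟨haW, haS⟩, haU⟩ := haF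
    refine ⟨Function.update c s(v₀, y₀) a,
      hc.insert ha hn (fun h => haU (hU1 h)) (fun h => haW (hW1 h)), ?_, ?_⟩
    · intro v hv z w hz hw hzv hzw
      have hvv₀ : v ≠ v₀ := fun h => hv (h ▸ hv₀)
      have hadjvz : G.Adj v z := by
        rcases Finset.mem_insert.1 hz with h | h
        · have : s(v, z) ∈ G.edgeSet := h ▸ heG
          exact this
        · exact hEG _ h
      have hzv₀ : z ≠ v₀ := by
        rintro rfl
        have := hv₀ v hadjvz.symm
        omega
      have hzE : s(v, z) ∈ E := by
        refine (Finset.mem_insert.1 hz).resolve_left fun h => ?_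
        rcases Sym2.eq_iff.1 h with ⟨h, -⟩ | ⟨-, h⟩
        · exact hvv₀ h
        · exact hzv₀ h
      by_cases hvy : v = y₀
      · subst hvy
        rw [pal_insert_right hn, pal_insert_of_ne hzv₀ hadjvz.ne']
        intro hsub
        rw [Finset.insert_subset_iff] at hsub
        exact haW (hW2 z hzE hzv hsub.2 hsub.1)
      have hwE : s(v, w) ∈ E := by
        refine (Finset.mem_insert.1 hw).resolve_left fun h => ?_
        rcases Sym2.eq_iff.1 h with ⟨h, -⟩ | ⟨h, -⟩
        · exact hvv₀ h
        · exact hvy h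
      have hdead := hI v hv z w hzE hwE hzv hzw
      rw [pal_insert_of_ne hvv₀ hvy]
      by_cases hzy : z = y₀
      · subst hzy
        rw [pal_insert_right hn]
        exact hS2 v a hadjvz hvv₀ hzv haS hdead
      · rwa [pal_insert_of_ne hzv₀ hzy]
    · intro v y hv hvy
      have hadjvy := hFG v y hvy
      obtain ⟨hσv, -⟩ := hσ v y hadjvy
      have hvy₀ : v ≠ y₀ := fun h => hy₀ (h ▸ hv)
      have hσv₀ : σ v y ≠ v₀ := by
        intro h
        rw [h] at hσv
        have h1 := hv _ hσv
        have h2 := hv₀ _ hσv.symm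
        omega
      by_cases hvv₀ : v = v₀
      · subst hvv₀
        rw [pal_insert_left hn]
        by_cases hyy : y = y₀
        · subst hyy
          rw [pal_insert_of_ne hσv₀ hσne]
          intro hsub
          rw [Finset.insert_subset_iff] at hsub
          exact haU (hU2 hsub.2 hsub.1)
        · have hdead := hIIF v y hv hvy fun h => hyy (Sym2.congr_right.1 h)
          obtain ⟨b, hb, hb'⟩ := Finset.not_subset.1 hdead
          by_cases hσy : σ v y = y₀
          · rw [hσy, pal_insert_right hn]
            intro hsub
            -- Both palettes receive `a`, which is new at `v`, so the old witness `b` survives.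
            rcases Finset.mem_insert.1 (hsub (Finset.mem_insert_of_mem hb)) with h | h
            · exact haU (hU1 (h ▸ hb))
            · exact hb' (hσy ▸ h)
          · rw [pal_insert_of_ne hσv₀ hσy]
            exact fun hsub => hb' (hsub (Finset.mem_insert_of_mem hb))
      · have hdead := hIIF v y hv hvy fun h => by
          rcases Sym2.eq_iff.1 h with ⟨h, -⟩ | ⟨h, -⟩
          · exact hvv₀ h
          · exact hvy₀ h
        rw [pal_insert_of_ne hvv₀ hvy₀]
        by_cases hσy : σ v y = y₀
        · rw [hσy] at hdead hσv ⊢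
          rw [pal_insert_right hn]
          exact hS2 v a hσv hvv₀ (hv _ hσv) haS hdead
        · rwa [pal_insert_of_ne hσv₀ hσy]

/-! ### The auxiliary choices and the conclusion -/

lemma exists_rank : ∃ ρ : V → ℕ, Function.Injective ρ ∧
    ∀ u v, ρ u < ρ v → G.degree v ≤ G.degree u := by
  let n := Fintype.card V
  let f := Fintype.equivFin V
  -- Lexicographic order by decreasing degree and then by an enumeration of the vertices.
  have key : ∀ u v, G.degree v < G.degree u →
      (G.maxDegree - G.degree u) * n + (f u : ℕ) < (G.maxDegree - G.degree v) * n + (f v : ℕ) := by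
    intro u v h
    have h1 := G.degree_le_maxDegree u
    have h2 : (G.maxDegree - G.degree u) + 1 ≤ G.maxDegree - G.degree v := by omega
    have h3 := Nat.mul_le_mul_right n h2
    have h4 : (f u : ℕ) < n := (f u).2
    rw [Nat.add_mul] at h3
    omega
  refine ⟨fun v => (G.maxDegree - G.degree v) * n + (f v : ℕ), fun u v h => ?_, fun u v h => ?_⟩
  · have h' : (G.maxDegree - G.degree u) * n + (f u : ℕ) =
        (G.maxDegree - G.degree v) * n + (f v : ℕ) := h
    rcases lt_trichotomy (G.degree u) (G.degree v) with hd | hd | hd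
    · have := key v u hd; omega
    · rw [hd] at h'
      exact f.injective (Fin.ext (by omega))
    · have := key u v hd; omega
  · by_contra! hd
    exact absurd h (not_lt.2 (key v u hd).le)

/-- Rotation of every neighbourhood. -/
lemma exists_rotation (h2 : 2 ≤ G.minDegree) : ∃ σ : V → V → V,
    (∀ v y, G.Adj v y → G.Adj v (σ v y) ∧ σ v y ≠ y) ∧
    ∀ v z, G.Adj v z → ∃ y, G.Adj v y ∧ σ v y = z := by
  have h : ∀ v, ∃ τ : V → V, (∀ y, G.Adj v y → G.Adj v (τ y) ∧ τ y ≠ y) ∧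
      ∀ z, G.Adj v z → ∃ y, G.Adj v y ∧ τ y = z := by
    intro v
    obtain ⟨f, hf, -⟩ := (G.neighborFinset v).exists_cycleOn
    have hnt : (G.neighborFinset v : Set V).Nontrivial := by
      rw [Finset.nontrivial_coe, ← Finset.one_lt_card_iff_nontrivial, G.card_neighborFinset_eq_degree]
      have := G.minDegree_le_degree v
      omega
    refine ⟨f, fun y hy => ?_, fun z hz => ?_⟩
    · have hy' : y ∈ (G.neighborFinset v : Set V) := by simpa using hy
      exact ⟨by simpa using hf.1.mapsTo hy', hf.apply_ne hnt hy'⟩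
    · obtain ⟨y, hy, rfl⟩ := hf.1.surjOn (show z ∈ (G.neighborFinset v : Set V) by simpa using hz)
      exact ⟨y, by simpa using hy, rfl⟩
  choose σ h1 h3 using h
  exact ⟨σ, h1, h3⟩

lemma exists_coloring (h2 : 2 ≤ G.minDegree) : ∃ c : Sym2 V → ℕ,
    PartialProper G.edgeFinset c (3 * G.maxDegree - 1) ∧
      ∀ u v, G.Adj u v → ¬ pal G.edgeFinset c u ⊆ pal G.edgeFinset c v := by
  obtain ⟨ρ, hρ, hdeg⟩ := exists_rank G
  obtain ⟨σ, hσ, hsurj⟩ := exists_rotation G h2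
  have hΔ : 2 ≤ G.maxDegree := h2.trans G.minDegree_le_maxDegree
  let F := G.edgeFinset.filter (fun e => ∃ v ∈ e, IsSink G ρ v)
  let E₀ := G.edgeFinset.filter (fun e => ¬ ∃ v ∈ e, IsSink G ρ v)
  have hFE : F ∪ E₀ = G.edgeFinset := filter_union_filter_not_eq _ _
  obtain ⟨c, hc, hI, hII⟩ := exists_phase_two G hρ hΔ σ hσ E₀
    (fun e he => by simpa using (Finset.mem_filter.1 he).1)
    (fun v hv y h => (Finset.mem_filter.1 h).2 ⟨v, Sym2.mem_mk_left v y, hv⟩) F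
    (fun e he => ⟨by simpa using (Finset.mem_filter.1 he).1, (Finset.mem_filter.1 he).2⟩)
  rw [hFE] at hc hI hII
  refine ⟨c, hc, ?_⟩
  have hmem : ∀ u v, G.Adj u v → s(u, v) ∈ G.edgeFinset := fun u v h => by simpa using h
  have hdead : ∀ u z, G.Adj u z → ρ z < ρ u → ¬ pal G.edgeFinset c u ⊆ pal G.edgeFinset c z := by
    intro u z huz hlt
    by_cases hu : IsSink G ρ u
    · obtain ⟨y, hy, rfl⟩ := hsurj u z huz
      exact hII u y hu (Finset.mem_filter.2 ⟨hmem u y hy, u, Sym2.mem_mk_left u y, hu⟩)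
    · have hu' := hu
      unfold IsSink at hu'
      push Not at hu'
      obtain ⟨w, huw, hw⟩ := hu'
      exact hI u hu z w (hmem u z huz) (hmem u w huw) hlt (by omega)
  have hcard : ∀ v, (pal G.edgeFinset c v).card = G.degree v := by
    intro v
    rw [pal, card_image_of_injOn, ← G.card_neighborFinset_eq_degree]
    · congr 1
      ext u
      simp
    · intro u hu w hw huw
      by_contra hne
      exact hc.2 v u w (by simpa using hu) (by simpa using hw) hne huw
  intro u v huv
  rcases lt_trichotomy (ρ u) (ρ v) with h | h | h
  · -- As `deg v ≤ deg u`, the inclusion would be an equality.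
    intro hsub
    have heq := eq_of_subset_of_card_le hsub (by rw [hcard, hcard]; exact hdeg u v h)
    exact hdead v u huv.symm h heq.ge
  · exact absurd (hρ h) huv.ne
  · exact hdead u v huv h

end InclusionFree

theorem inclusion_chromatic_index_le_three_Delta {V : Type*} [Fintype V]
    (G : SimpleGraph V) [DecidableRel G.Adj] (δ Δ : ℕ)
    (hδ : G.minDegree = δ) (h2 : 2 ≤ δ) (hΔ : G.maxDegree = Δ) :
    inclusionChromaticIndex G ≤ 3 * Δ - 1 := by
  subst hδ hΔ
  obtain ⟨c, hc, hdead⟩ := InclusionFree.exists_coloring G h2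
  have hpal : ∀ v, palette G c v = (InclusionFree.pal G.edgeFinset c v : Set ℕ) := by
    intro v
    ext n
    simp [palette, InclusionFree.mem_pal]
  refine Nat.sInf_le ⟨c, ⟨fun u v w hv hw => hc.2 u v w (by simpa using hv) (by simpa using hw), ?_⟩,
    fun e he => hc.1 e (by simpa using he)⟩
  intro u v huv
  rw [hpal, hpal, Finset.coe_subset]
  exact hdead u v huv
end
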